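/- Let g, g' : ℝ² → [0,∞) be continuous, compactly supported, and not identically zero. Then for every θ̄ ∈ ℝ, the pairing N_{g,g'}(θ̄) = ∫_{(ℝ²)⁴} g(x₁) g(x₂) W^{θ̄}(1,(x₁,x₂),(x₁',x₂')) g'(x₁') g'(x₂') dx₁ dx₂ dx₁' dx₂' is finite and strictly positive: 0 < N_{g,g'}(θ̄) < ∞. -/

import Mathlib

open MeasureTheory Set ENNReal

noncomputable section

abbrev Plane := EuclideanSpace ℝ (Fin 2)

/-- The 2d heat kernel `p(t,x) = (2πt)⁻¹ exp(−|x|²/(2t))`. -/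
def heatK (t : ℝ) (x : Plane) : ℝ :=
  (2 * Real.pi * t)⁻¹ * Real.exp (-‖x‖ ^ 2 / (2 * t))

/-- `j^{θ̄}(t) = e^{θ̄ t} ∫₀^∞ u^{t−1}/Γ(u) du`. -/
def jfn (θ : ℝ) (t : ℝ) : ℝ :=
  Real.exp (θ * t) * ∫ u in Ioi (0 : ℝ), u ^ (t - 1) / Real.Gamma u

/-- The kernel `W^{θ̄}(t,(x₁,x₂),(x₁',x₂'))`, defined as a fourfold iterated integral with
values in `[0,∞]`. Here `u'' = t − u − u'`. -/
def Wker (θ t : ℝ) (x₁ x₂ x₁' x₂' : Plane) : ℝ≥0∞ :=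
  ∫⁻ u in Ioo (0 : ℝ) t, ∫⁻ u' in Ioo (0 : ℝ) (t - u), ∫⁻ y : Plane, ∫⁻ y' : Plane,
    ENNReal.ofReal (heatK u (x₁ - y) * heatK u (x₂ - y) *
      (4 * Real.pi * jfn θ u' * heatK (u' / 2) (y - y')) *
      (heatK (t - u - u') (y' - x₁') * heatK (t - u - u') (y' - x₂')))

/-- The pairing `N_{g,g'}(θ̄) = ∫ g(x₁)g(x₂) W^{θ̄}(1,(x₁,x₂),(x₁',x₂')) g'(x₁')g'(x₂') dx`. -/
def Npair (g g' : Plane → ℝ) (θ : ℝ) : ℝ≥0∞ :=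
  ∫⁻ x₁ : Plane, ∫⁻ x₂ : Plane, ∫⁻ x₁' : Plane, ∫⁻ x₂' : Plane,
    ENNReal.ofReal (g x₁ * g x₂) * Wker θ 1 x₁ x₂ x₁' x₂' *
      ENNReal.ofReal (g' x₁' * g' x₂')

/-! ### Bounds on `jfn` -/

theorem gamma_lower (s : ℝ) (hs : 0 < s) :
    Real.exp (-Real.exp 2) * Real.exp (2 * s) ≤ Real.Gamma (s + 1) := by
  have h1 : 0 < s + 1 := by linarith
  rw [Real.Gamma_eq_integral h1]
  have hconv := Real.GammaIntegral_convergent h1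
  have hsub : Ioi (Real.exp 2) ⊆ Ioi (0 : ℝ) := Ioi_subset_Ioi (Real.exp_pos 2).le
  have step1 : ∫ x in Ioi (Real.exp 2), Real.exp (-x) * x ^ (s + 1 - 1) ≤
      ∫ x in Ioi (0 : ℝ), Real.exp (-x) * x ^ (s + 1 - 1) := by
    apply setIntegral_mono_set hconv
    · filter_upwards [ae_restrict_mem measurableSet_Ioi] with x hx
      have : (0 : ℝ) < x := hx
      simp only [Pi.zero_apply]
      positivity
    · exact hsub.eventuallyLE
  refine le_trans ?_ step1
  have e : ∫ x in Ioi (Real.exp 2), Real.exp (-x) * Real.exp (2 * s) =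
      Real.exp (-Real.exp 2) * Real.exp (2 * s) := by
    rw [integral_mul_const, integral_exp_neg_Ioi]
  rw [← e]
  apply setIntegral_mono_on
  · have := exp_neg_integrableOn_Ioi (Real.exp 2) (b := 1) one_pos
    simp only [neg_mul, one_mul] at this
    exact this.mul_const _
  · exact hconv.mono_set hsub
  · exact measurableSet_Ioi
  · intro x hx
    have hx' : Real.exp 2 < x := hx
    have : Real.exp (2 * s) = (Real.exp 2) ^ s := by
      rw [← Real.exp_mul]
    rw [this, add_sub_cancel_right]
    gcongr

theorem jint_bound (t : ℝ) (ht : 0 < t) (ht1 : t < 1) (u : ℝ) (hu : 0 < u) :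
    u ^ (t - 1) / Real.Gamma u ≤ Real.exp (Real.exp 2) * Real.exp (-u) := by
  have hG := gamma_lower u hu
  rw [Real.Gamma_add_one hu.ne'] at hG
  have hGp := Real.Gamma_pos_of_pos hu
  have hpow : u ^ t ≤ Real.exp u := by
    have h1 : u ^ t ≤ 1 + u := by
      rcases le_total u 1 with h | h
      · have := Real.rpow_le_one hu.le h ht.le
        linarith
      · have := Real.rpow_le_rpow_of_exponent_le h ht1.le
        rw [Real.rpow_one] at this
        linarith
    have := Real.add_one_le_exp u
    linarith
  rw [Real.rpow_sub_one hu.ne', div_div, div_le_iff₀ (by positivity)]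
  calc u ^ t ≤ Real.exp u := hpow
    _ = Real.exp (Real.exp 2) * Real.exp (-u) *
        (Real.exp (-Real.exp 2) * Real.exp (2 * u)) := by
      rw [← Real.exp_add, ← Real.exp_add, ← Real.exp_add]
      congr 1
      ring
    _ ≤ _ := by gcongr

theorem jint_integrable (t : ℝ) (ht : 0 < t) (ht1 : t < 1) :
    IntegrableOn (fun u : ℝ => u ^ (t - 1) / Real.Gamma u) (Ioi 0) := by
  have hb : IntegrableOn (fun u : ℝ => Real.exp (Real.exp 2) * Real.exp (-u)) (Ioi 0) := by
    have := exp_neg_integrableOn_Ioi 0 (b := 1) one_pos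
    simp only [neg_mul, one_mul] at this
    exact this.const_mul _
  refine Integrable.mono' hb ?_ ?_
  · apply ContinuousOn.aestronglyMeasurable _ measurableSet_Ioi
    apply ContinuousOn.div
    · intro x hx
      have : (0 : ℝ) < x := hx
      exact (Real.continuousAt_rpow_const x _ (Or.inl this.ne')).continuousWithinAt
    · exact Real.differentiableOn_Gamma_Ioi.continuousOn
    · intro x hx
      exact (Real.Gamma_pos_of_pos hx).ne'
  · filter_upwards [ae_restrict_mem measurableSet_Ioi] with u hu
    have hu' : (0 : ℝ) < u := hu
    have := Real.Gamma_pos_of_pos hu'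
    rw [Real.norm_of_nonneg (by positivity)]
    exact jint_bound t ht ht1 u hu'

theorem jfn_upper (θ t : ℝ) (ht : 0 < t) (ht1 : t < 1) :
    jfn θ t ≤ Real.exp |θ| * Real.exp (Real.exp 2) := by
  unfold jfn
  have h2 : ∫ u in Ioi (0 : ℝ), u ^ (t - 1) / Real.Gamma u ≤ Real.exp (Real.exp 2) := by
    calc _ ≤ ∫ u in Ioi (0 : ℝ), Real.exp (Real.exp 2) * Real.exp (-u) := by
          apply setIntegral_mono_on (jint_integrable t ht ht1) _ measurableSet_Ioi
          · intro u hu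
            exact jint_bound t ht ht1 u hu
          · have := exp_neg_integrableOn_Ioi 0 (b := 1) one_pos
            simp only [neg_mul, one_mul] at this
            exact this.const_mul _
      _ = _ := by rw [integral_const_mul, integral_exp_neg_Ioi_zero, mul_one]
  have h1 : θ * t ≤ |θ| := by
    have := le_abs_self θ
    have := abs_nonneg θ
    nlinarith
  apply mul_le_mul (Real.exp_le_exp.2 h1) h2 _ (Real.exp_pos _).le
  apply setIntegral_nonneg measurableSet_Ioi
  intro u hu
  have hu' : (0 : ℝ) < u := hu
  have := Real.Gamma_pos_of_pos hu'
  positivity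

theorem jfn_lower (θ t : ℝ) (ht : 0 < t) (ht1 : t < 1) :
    Real.exp (-|θ|) * (1 / 2) ≤ jfn θ t := by
  unfold jfn
  have h1 : -|θ| ≤ θ * t := by
    have := neg_abs_le θ
    have := abs_nonneg θ
    nlinarith
  have hInt := jint_integrable t ht ht1
  have hsub : Ioo (1 : ℝ) 2 ⊆ Ioi 0 := fun x hx => lt_trans one_pos hx.1
  have h2 : (1 / 2 : ℝ) ≤ ∫ u in Ioi (0 : ℝ), u ^ (t - 1) / Real.Gamma u := by
    calc (1 / 2 : ℝ) = ∫ u in Ioo (1 : ℝ) 2, (1 / 2 : ℝ) := by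
          simp; norm_num
      _ ≤ ∫ u in Ioo (1 : ℝ) 2, u ^ (t - 1) / Real.Gamma u := by
          apply setIntegral_mono_on _ (hInt.mono_set hsub) measurableSet_Ioo
          · intro u hu
            have hu0 : 0 < u := lt_trans one_pos hu.1
            have hGp := Real.Gamma_pos_of_pos hu0
            have hG : Real.Gamma u ≤ 1 := by
              have := Real.convexOn_Gamma.le_max_of_mem_Icc (x := 1) (y := 2) (z := u)
                (by simp) (by simp) ⟨hu.1.le, hu.2.le⟩
              simpa using this
            have hp : (1 / 2 : ℝ) ≤ u ^ (t - 1) := by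
              have e := Real.rpow_le_rpow_of_exponent_le hu.1.le (show (-1 : ℝ) ≤ t - 1 by linarith)
              rw [Real.rpow_neg_one] at e
              refine le_trans ?_ e
              rw [one_div]
              exact inv_anti₀ hu0 hu.2.le
            rw [le_div_iff₀ hGp]
            nlinarith
          · simp
      _ ≤ _ := by
          apply setIntegral_mono_set hInt
          · filter_upwards [ae_restrict_mem measurableSet_Ioi] with u hu
            have hu' : (0 : ℝ) < u := hu
            have := Real.Gamma_pos_of_pos hu'
            simp only [Pi.zero_apply]
            positivity
          · exact hsub.eventuallyLE
  exact mul_le_mul (Real.exp_le_exp.2 h1) h2 (by norm_num) (Real.exp_pos _).le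

/-! ### The heat kernel -/

theorem heatK_nonneg (t : ℝ) (ht : 0 < t) (x : Plane) : 0 ≤ heatK t x := by
  unfold heatK
  positivity

theorem heatK_lower (t R : ℝ) (ht : 1 / 8 ≤ t) (ht1 : t ≤ 1) (x : Plane) (hx : ‖x‖ ≤ R) :
    (2 * Real.pi)⁻¹ * Real.exp (-(4 * R ^ 2)) ≤ heatK t x := by
  unfold heatK
  have ht0 : 0 < t := by linarith
  have hpi := Real.pi_pos
  have hn := norm_nonneg x
  apply mul_le_mul
  · apply inv_anti₀ (by positivity)
    nlinarith
  · apply Real.exp_le_exp.2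
    rw [neg_div, neg_le_neg_iff, div_le_iff₀ (by positivity)]
    have : ‖x‖ ^ 2 ≤ R ^ 2 := by gcongr
    nlinarith [sq_nonneg R]
  · positivity
  · positivity

theorem integral_heatK (t : ℝ) (ht : 0 < t) : ∫ x : Plane, heatK t x = 1 := by
  unfold heatK
  have h := GaussianFourier.integral_rexp_neg_mul_sq_norm (V := Plane) (b := (2 * t)⁻¹)
    (by positivity)
  have e : (fun v : Plane => Real.exp (-‖v‖ ^ 2 / (2 * t))) =
      fun v => Real.exp (-(2 * t)⁻¹ * ‖v‖ ^ 2) := by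
    funext v
    congr 1
    ring
  rw [integral_const_mul, e, h]
  have hpi := Real.pi_pos
  simp
  field_simp

theorem lintegral_heatK (t : ℝ) (ht : 0 < t) :
    ∫⁻ x : Plane, ENNReal.ofReal (heatK t x) = 1 := by
  have h := integral_heatK t ht
  have hi : Integrable (fun x : Plane => heatK t x) := by
    by_contra hc
    rw [integral_undef hc] at h
    exact zero_ne_one h
  rw [← ofReal_integral_eq_lintegral_ofReal hi (Filter.Eventually.of_forall (heatK_nonneg t ht)), h,
    ENNReal.ofReal_one]

/-- `[0,∞]`-valued heat kernel, cut off to positive times. -/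
def qK (t : ℝ) (x : Plane) : ℝ≥0∞ :=
  (Ioi (0 : ℝ)).indicator (fun s => ENNReal.ofReal (heatK s x)) t

theorem qK_of_pos (t : ℝ) (ht : 0 < t) (x : Plane) : qK t x = ENNReal.ofReal (heatK t x) := by
  simp [qK, ht]

theorem measurable_qK : Measurable (fun z : ℝ × Plane => qK z.1 z.2) := by
  have e : (fun z : ℝ × Plane => qK z.1 z.2) =
      ((fun z : ℝ × Plane => z.1) ⁻¹' (Ioi 0)).indicator
        (fun z => ENNReal.ofReal (heatK z.1 z.2)) := by
    funext z
    simp [qK, indicator]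
  rw [e]
  apply Measurable.indicator
  · unfold heatK
    fun_prop
  · exact measurable_fst measurableSet_Ioi

theorem measurable_qK_comp {α : Type*} [MeasurableSpace α] {f : α → ℝ} {h : α → Plane}
    (hf : Measurable f) (hh : Measurable h) : Measurable (fun a => qK (f a) (h a)) := by
  have h1 : Measurable (fun a => (f a, h a)) := hf.prodMk hh
  have h2 := measurable_qK
  generalize qK = q at h2 ⊢
  exact Measurable.comp (g := fun z : ℝ × Plane => q z.1 z.2) h2 h1

theorem lintegral_qK_le (t : ℝ) : ∫⁻ x : Plane, qK t x ≤ 1 := by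
  by_cases ht : 0 < t
  · simp_rw [qK_of_pos t ht]
    exact (lintegral_heatK t ht).le
  · simp [qK, ht]

theorem lintegral_qK_sub_right (t : ℝ) (y : Plane) : ∫⁻ x : Plane, qK t (x - y) ≤ 1 := by
  rw [lintegral_sub_right_eq_self (fun x => qK t x) y]
  exact lintegral_qK_le t

theorem lintegral_qK_sub_left (t : ℝ) (y : Plane) : ∫⁻ x : Plane, qK t (y - x) ≤ 1 := by
  rw [lintegral_sub_left_eq_self (fun x => qK t x) y]
  exact lintegral_qK_le t

/-! ### Positivity -/

theorem lintegral_lower {α : Type*} [MeasurableSpace α] (μ : Measure α) (S : Set α)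
    (hS : MeasurableSet S) (c : ℝ≥0∞) (f : α → ℝ≥0∞) (h : ∀ x ∈ S, c ≤ f x) :
    c * μ S ≤ ∫⁻ x, f x ∂μ := by
  rw [← setLIntegral_const]
  exact (setLIntegral_mono' hS h).trans (setLIntegral_le_lintegral _ _)

theorem Wker_lower (θ R : ℝ) : ∃ c : ℝ≥0∞, 0 < c ∧ ∀ x₁ x₂ x₁' x₂' : Plane,
    ‖x₁‖ ≤ R → ‖x₂‖ ≤ R → ‖x₁'‖ ≤ R → ‖x₂'‖ ≤ R → c ≤ Wker θ 1 x₁ x₂ x₁' x₂' := by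
  have hpi := Real.pi_pos
  set k : ℝ := (2 * Real.pi)⁻¹ * Real.exp (-(4 * (R + 2) ^ 2)) with hk
  have hk0 : 0 < k := by positivity
  set J : ℝ := Real.exp (-|θ|) * (1 / 2) with hJ
  have hJ0 : 0 < J := by positivity
  set B : Set Plane := Metric.ball 0 1 with hB
  have hBm : MeasurableSet B := measurableSet_ball
  have hBp : 0 < volume B := Metric.measure_ball_pos _ _ one_pos
  set I : Set ℝ := Ioo (1 / 4 : ℝ) (1 / 3) with hI
  have hIm : MeasurableSet I := measurableSet_Ioo
  have hIp : 0 < volume I := by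
    rw [hI, Real.volume_Ioo]
    apply ENNReal.ofReal_pos.2
    norm_num
  set K : ℝ≥0∞ := ENNReal.ofReal (k * k * (4 * Real.pi * J * k) * (k * k)) with hK
  have hKp : 0 < K := ENNReal.ofReal_pos.2 (by positivity)
  refine ⟨K * volume B * volume B * volume I * volume I, ?_, ?_⟩
  · apply pos_iff_ne_zero.2
    simp only [ne_eq, mul_eq_zero, not_or]
    exact ⟨⟨⟨⟨hKp.ne', hBp.ne'⟩, hBp.ne'⟩, hIp.ne'⟩, hIp.ne'⟩
  · intro x₁ x₂ x₁' x₂' h₁ h₂ h₁' h₂'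
    unfold Wker
    have r1 : volume I = (volume.restrict (Ioo (0 : ℝ) 1)) I := by
      rw [Measure.restrict_apply hIm, inter_eq_left.2]
      intro u hu
      exact ⟨by linarith [hu.1], by linarith [hu.2]⟩
    nth_rewrite 2 [r1]
    apply lintegral_lower _ _ hIm
    intro u hu
    have r2 : volume I = (volume.restrict (Ioo (0 : ℝ) (1 - u))) I := by
      rw [Measure.restrict_apply hIm, inter_eq_left.2]
      intro u' hu'
      exact ⟨by linarith [hu'.1], by linarith [hu'.2, hu.2]⟩
    rw [r2]
    apply lintegral_lower _ _ hIm
    intro u' hu'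
    apply lintegral_lower _ _ hBm
    intro y hy
    apply lintegral_lower _ _ hBm
    intro y' hy'
    rw [hB, mem_ball_zero_iff] at hy hy'
    obtain ⟨hu1, hu2⟩ := hu
    obtain ⟨hu1', hu2'⟩ := hu'
    apply ENNReal.ofReal_le_ofReal
    have a1 : k ≤ heatK u (x₁ - y) := heatK_lower _ _ (by linarith) (by linarith) _
      ((norm_sub_le _ _).trans (by linarith))
    have a2 : k ≤ heatK u (x₂ - y) := heatK_lower _ _ (by linarith) (by linarith) _
      ((norm_sub_le _ _).trans (by linarith))
    have a3 : k ≤ heatK (u' / 2) (y - y') := heatK_lower _ _ (by linarith) (by linarith) _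
      ((norm_sub_le _ _).trans (by linarith [norm_nonneg x₁]))
    have a4 : k ≤ heatK (1 - u - u') (y' - x₁') := heatK_lower _ _ (by linarith) (by linarith) _
      ((norm_sub_le _ _).trans (by linarith))
    have a5 : k ≤ heatK (1 - u - u') (y' - x₂') := heatK_lower _ _ (by linarith) (by linarith) _
      ((norm_sub_le _ _).trans (by linarith))
    have a6 : J ≤ jfn θ u' := jfn_lower θ u' (by linarith) (by linarith)
    have b1 := hk0.trans_le a1
    have b2 := hk0.trans_le a2
    have b3 := hk0.trans_le a3
    have b4 := hk0.trans_le a4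
    have b5 := hk0.trans_le a5
    have b6 := hJ0.trans_le a6
    gcongr

theorem exists_ball_lower (g : Plane → ℝ) (hgc : Continuous g) (hg0 : ∀ x, 0 ≤ g x)
    (hgne : g ≠ 0) : ∃ (a : Plane) (c : ℝ), 0 < c ∧ ∃ S : Set Plane, MeasurableSet S ∧
      0 < volume S ∧ ∀ x ∈ S, c ≤ g x ∧ ‖x‖ ≤ ‖a‖ + 1 := by
  obtain ⟨a, ha⟩ := Function.ne_iff.1 hgne
  have ha' : 0 < g a := lt_of_le_of_ne (hg0 a) (Ne.symm ha)
  refine ⟨a, g a / 2, by positivity, {x | g a / 2 < g x} ∩ Metric.ball a 1, ?_, ?_, ?_⟩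
  · exact ((isOpen_lt continuous_const hgc).inter Metric.isOpen_ball).measurableSet
  · refine ((isOpen_lt continuous_const hgc).inter Metric.isOpen_ball).measure_pos volume ?_
    exact ⟨a, by change g a / 2 < g a; linarith, Metric.mem_ball_self one_pos⟩
  · rintro x ⟨h1, h2⟩
    refine ⟨le_of_lt h1, ?_⟩
    rw [mem_ball_iff_norm] at h2
    have := norm_add_le a (x - a)
    rw [add_sub_cancel] at this
    linarith

theorem Npair_pos (g g' : Plane → ℝ) (hgc : Continuous g) (hg'c : Continuous g')
    (hg0 : ∀ x, 0 ≤ g x) (hg'0 : ∀ x, 0 ≤ g' x)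
    (hgne : g ≠ 0) (hg'ne : g' ≠ 0) (θ : ℝ) : 0 < Npair g g' θ := by
  obtain ⟨a, c, hc, S, hSm, hSp, hS⟩ := exists_ball_lower g hgc hg0 hgne
  obtain ⟨a', c', hc', S', hSm', hSp', hS'⟩ := exists_ball_lower g' hg'c hg'0 hg'ne
  obtain ⟨w, hw, hW⟩ := Wker_lower θ (‖a‖ + ‖a'‖ + 1)
  have n1 := norm_nonneg a
  have n2 := norm_nonneg a'
  have main : ENNReal.ofReal (c * c) * w * ENNReal.ofReal (c' * c') * volume S' * volume S' *
      volume S * volume S ≤ Npair g g' θ := by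
    unfold Npair
    apply lintegral_lower _ _ hSm
    intro x₁ h₁
    apply lintegral_lower _ _ hSm
    intro x₂ h₂
    apply lintegral_lower _ _ hSm'
    intro x₁' h₁'
    apply lintegral_lower _ _ hSm'
    intro x₂' h₂'
    obtain ⟨b1, m1⟩ := hS _ h₁
    obtain ⟨b2, m2⟩ := hS _ h₂
    obtain ⟨b1', m1'⟩ := hS' _ h₁'
    obtain ⟨b2', m2'⟩ := hS' _ h₂'
    have := hW x₁ x₂ x₁' x₂' (by linarith) (by linarith) (by linarith) (by linarith)
    have e1 : c * c ≤ g x₁ * g x₂ := mul_le_mul b1 b2 hc.le (hg0 _)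
    have e2 : c' * c' ≤ g' x₁' * g' x₂' := mul_le_mul b1' b2' hc'.le (hg'0 _)
    gcongr
  refine lt_of_lt_of_le ?_ main
  apply pos_iff_ne_zero.2
  have p1 : ENNReal.ofReal (c * c) ≠ 0 := (ENNReal.ofReal_pos.2 (by positivity)).ne'
  have p2 : ENNReal.ofReal (c' * c') ≠ 0 := (ENNReal.ofReal_pos.2 (by positivity)).ne'
  simp only [ne_eq, mul_eq_zero, not_or]
  exact ⟨⟨⟨⟨⟨⟨p1, hw.ne'⟩, p2⟩, hSp'.ne'⟩, hSp'.ne'⟩, hSp.ne'⟩, hSp.ne'⟩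



def nuT : Measure ℝ := volume.restrict (Ioo (0 : ℝ) 1)

instance : IsFiniteMeasure nuT := by
  unfold nuT
  infer_instance

theorem Wker_upper (θ : ℝ) : ∃ K : ℝ≥0∞, K ≠ ⊤ ∧ ∀ x₁ x₂ x₁' x₂' : Plane,
    Wker θ 1 x₁ x₂ x₁' x₂' ≤ ∫⁻ u, (∫⁻ u', (∫⁻ y : Plane, ∫⁻ y' : Plane,
      K * qK (u' / 2) (y - y') * qK u (x₁ - y) * qK u (x₂ - y) *
        qK (1 - u - u') (y' - x₁') * qK (1 - u - u') (y' - x₂')) ∂nuT) ∂nuT := by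
  have hpi := Real.pi_pos
  set C : ℝ := Real.exp |θ| * Real.exp (Real.exp 2) with hC
  have hC0 : 0 < C := by positivity
  refine ⟨ENNReal.ofReal (4 * Real.pi * C), ENNReal.ofReal_ne_top, ?_⟩
  intro x₁ x₂ x₁' x₂'
  unfold Wker nuT
  apply setLIntegral_mono' measurableSet_Ioo
  intro u hu
  have hsub : Ioo (0 : ℝ) (1 - u) ⊆ Ioo 0 1 := Ioo_subset_Ioo le_rfl (by linarith [hu.1])
  refine le_trans ?_ (lintegral_mono_set hsub)
  apply setLIntegral_mono' measurableSet_Ioo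
  intro u' hu'
  apply lintegral_mono
  intro y
  apply lintegral_mono
  intro y'
  obtain ⟨hu1, hu2⟩ := hu
  obtain ⟨hu1', hu2'⟩ := hu'
  have t3 : 0 < 1 - u - u' := by linarith
  have t2 : 0 < u' / 2 := by linarith
  simp only [qK_of_pos _ t3, qK_of_pos _ t2, qK_of_pos _ hu1]
  have a1 := heatK_nonneg u hu1 (x₁ - y)
  have a2 := heatK_nonneg u hu1 (x₂ - y)
  have a3 := heatK_nonneg _ t2 (y - y')
  have a4 := heatK_nonneg _ t3 (y' - x₁')
  have a5 := heatK_nonneg _ t3 (y' - x₂')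
  have hj := jfn_upper θ u' hu1' (by linarith)
  rw [← ENNReal.ofReal_mul (by positivity), ← ENNReal.ofReal_mul (by positivity),
    ← ENNReal.ofReal_mul (by positivity), ← ENNReal.ofReal_mul (by positivity),
    ← ENNReal.ofReal_mul (by positivity)]
  apply ENNReal.ofReal_le_ofReal
  calc _ ≤ heatK u (x₁ - y) * heatK u (x₂ - y) *
      (4 * Real.pi * C * heatK (u' / 2) (y - y')) *
      (heatK (1 - u - u') (y' - x₁') * heatK (1 - u - u') (y' - x₂')) := by gcongr
    _ = _ := by ring

theorem swapL {α β : Type*} [MeasurableSpace α] [MeasurableSpace β] (μ : Measure α)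
    (ρ : Measure β) [SFinite μ] [SFinite ρ] (H : β → ℝ≥0∞) (b : α → β → ℝ≥0∞)
    (hH : Measurable H) (hb : Measurable (fun p : α × β => b p.1 p.2)) :
    ∫⁻ x, ∫⁻ z, H z * b x z ∂ρ ∂μ = ∫⁻ z, H z * ∫⁻ x, b x z ∂μ ∂ρ := by
  rw [lintegral_lintegral_swap]
  · apply lintegral_congr
    intro z
    rw [lintegral_const_mul]
    exact hb.comp (measurable_id.prodMk measurable_const)
  · apply Measurable.aemeasurable
    exact (hH.comp measurable_snd).mul hb

/-- The parameter space `((u,u'),(y,y'))`. -/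
abbrev ZT := (ℝ × ℝ) × (Plane × Plane)

/-- The measure on the parameter space. -/
def rhoT : Measure ((ℝ × ℝ) × (Plane × Plane)) := (nuT.prod nuT).prod (volume.prod volume)

instance : SFinite rhoT := by
  unfold rhoT
  infer_instance

theorem lintegral_rhoT (F : (ℝ × ℝ) × (Plane × Plane) → ℝ≥0∞) (hF : Measurable F) :
    ∫⁻ u, (∫⁻ u', (∫⁻ y : Plane, ∫⁻ y' : Plane, F ((u, u'), (y, y'))) ∂nuT) ∂nuT =
      ∫⁻ z, F z ∂rhoT := by
  unfold rhoT
  rw [lintegral_prod _ hF.aemeasurable, lintegral_prod]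
  · apply lintegral_congr; intro u
    apply lintegral_congr; intro u'
    rw [lintegral_prod]
    exact (hF.comp (measurable_const.prodMk measurable_id)).aemeasurable
  · exact hF.lintegral_prod_right'.aemeasurable

theorem four_swap {α β : Type*} [MeasurableSpace α] [MeasurableSpace β] (μ : Measure α)
    (ρ : Measure β) [SFinite μ] [SFinite ρ] (k : β → ℝ≥0∞) (a b : α → β → ℝ≥0∞)
    (hk : Measurable k) (ha : Measurable (fun p : α × β => a p.1 p.2))
    (hb : Measurable (fun p : α × β => b p.1 p.2)) :
    ∫⁻ x₁, ∫⁻ x₂, ∫⁻ x₁', ∫⁻ x₂', ∫⁻ z, k z * a x₁ z * a x₂ z * b x₁' z * b x₂' z ∂ρ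
      ∂μ ∂μ ∂μ ∂μ =
    ∫⁻ z, k z * (∫⁻ x, b x z ∂μ) * (∫⁻ x, b x z ∂μ) * (∫⁻ x, a x z ∂μ) * (∫⁻ x, a x z ∂μ) ∂ρ := by
  have ha1 : ∀ x, Measurable (a x) := fun x => ha.comp (measurable_const.prodMk measurable_id)
  have hb1 : ∀ x, Measurable (b x) := fun x => hb.comp (measurable_const.prodMk measurable_id)
  have hA : Measurable (fun z => ∫⁻ x, a x z ∂μ) := ha.lintegral_prod_left'
  have hB : Measurable (fun z => ∫⁻ x, b x z ∂μ) := hb.lintegral_prod_left'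
  have s1 : ∀ x₁ x₂ x₁', ∫⁻ x₂', ∫⁻ z, k z * a x₁ z * a x₂ z * b x₁' z * b x₂' z ∂ρ ∂μ =
      ∫⁻ z, (k z * (∫⁻ x, b x z ∂μ) * a x₁ z * a x₂ z) * b x₁' z ∂ρ := by
    intro x₁ x₂ x₁'
    rw [swapL μ ρ (fun z => k z * a x₁ z * a x₂ z * b x₁' z) b
      (((hk.mul (ha1 _)).mul (ha1 _)).mul (hb1 _)) hb]
    apply lintegral_congr; intro z; ring
  have s2 : ∀ x₁ x₂, ∫⁻ x₁', ∫⁻ z, (k z * (∫⁻ x, b x z ∂μ) * a x₁ z * a x₂ z) * b x₁' z ∂ρ ∂μ =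
      ∫⁻ z, (k z * (∫⁻ x, b x z ∂μ) * (∫⁻ x, b x z ∂μ) * a x₁ z) * a x₂ z ∂ρ := by
    intro x₁ x₂
    rw [swapL μ ρ (fun z => k z * (∫⁻ x, b x z ∂μ) * a x₁ z * a x₂ z) b
      (((hk.mul hB).mul (ha1 _)).mul (ha1 _)) hb]
    apply lintegral_congr; intro z; ring
  have s3 : ∀ x₁, ∫⁻ x₂, ∫⁻ z, (k z * (∫⁻ x, b x z ∂μ) * (∫⁻ x, b x z ∂μ) * a x₁ z) * a x₂ z ∂ρ ∂μ =
      ∫⁻ z, (k z * (∫⁻ x, b x z ∂μ) * (∫⁻ x, b x z ∂μ) * (∫⁻ x, a x z ∂μ)) * a x₁ z ∂ρ := by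
    intro x₁
    rw [swapL μ ρ (fun z => k z * (∫⁻ x, b x z ∂μ) * (∫⁻ x, b x z ∂μ) * a x₁ z) a
      (((hk.mul hB).mul hB).mul (ha1 _)) ha]
    apply lintegral_congr; intro z; ring
  simp_rw [s1, s2, s3]
  rw [swapL μ ρ (fun z => k z * (∫⁻ x, b x z ∂μ) * (∫⁻ x, b x z ∂μ) * (∫⁻ x, a x z ∂μ)) a
      (((hk.mul hB).mul hB).mul hA) ha]

theorem exists_ofReal_bound (g : Plane → ℝ) (hgc : Continuous g) (hgs : HasCompactSupport g) :
    ∃ M : ℝ≥0∞, M ≠ ⊤ ∧ ∀ x, ENNReal.ofReal (g x) ≤ M := by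
  obtain ⟨C, hC⟩ := hgc.bounded_above_of_compact_support hgs
  refine ⟨ENNReal.ofReal C, ENNReal.ofReal_ne_top, fun x => ENNReal.ofReal_le_ofReal ?_⟩
  exact (le_abs_self _).trans (hC x)

theorem Npair_fin (g g' : Plane → ℝ) (hgc : Continuous g) (hg'c : Continuous g')
    (hgs : HasCompactSupport g) (hg's : HasCompactSupport g')
    (hg0 : ∀ x, 0 ≤ g x) (hg'0 : ∀ x, 0 ≤ g' x) (θ : ℝ) : Npair g g' θ < ⊤ := by
  obtain ⟨K, hK, hW⟩ := Wker_upper θ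
  obtain ⟨M, hM, hgM⟩ := exists_ofReal_bound g hgc hgs
  obtain ⟨M', hM', hgM'⟩ := exists_ofReal_bound g' hg'c hg's
  have hL : ∫⁻ x, ENNReal.ofReal (g x) < ⊤ := by
    have := (hgc.integrable_of_hasCompactSupport (μ := volume) hgs).lintegral_lt_top
    exact this
  let k : ZT → ℝ≥0∞ := fun z => K * qK (z.1.2 / 2) (z.2.1 - z.2.2)
  let a : Plane → ZT → ℝ≥0∞ := fun x z => ENNReal.ofReal (g x) * qK z.1.1 (x - z.2.1)
  let b : Plane → ZT → ℝ≥0∞ := fun x z =>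
    ENNReal.ofReal (g' x) * qK (1 - z.1.1 - z.1.2) (z.2.2 - x)
  have hgm := hgc.measurable
  have hgm' := hg'c.measurable
  have hk : Measurable k := by
    apply Measurable.const_mul
    apply measurable_qK_comp <;> fun_prop
  have ha : Measurable (fun p : Plane × ZT => a p.1 p.2) := by
    apply Measurable.mul
    · fun_prop
    · apply measurable_qK_comp <;> fun_prop
  have hb : Measurable (fun p : Plane × ZT => b p.1 p.2) := by
    apply Measurable.mul
    · fun_prop
    · apply measurable_qK_comp <;> fun_prop
  have ha1 : ∀ x, Measurable (a x) := fun x => ha.comp (measurable_const.prodMk measurable_id)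
  have hb1 : ∀ x, Measurable (b x) := fun x => hb.comp (measurable_const.prodMk measurable_id)
  have step1 : Npair g g' θ ≤ ∫⁻ x₁, ∫⁻ x₂, ∫⁻ x₁', ∫⁻ x₂', ∫⁻ z,
      k z * a x₁ z * a x₂ z * b x₁' z * b x₂' z ∂rhoT := by
    unfold Npair
    apply lintegral_mono; intro x₁
    apply lintegral_mono; intro x₂
    apply lintegral_mono; intro x₁'
    apply lintegral_mono; intro x₂'
    dsimp only
    set F : ZT → ℝ≥0∞ := fun z => K * qK (z.1.2 / 2) (z.2.1 - z.2.2) * qK z.1.1 (x₁ - z.2.1) *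
      qK z.1.1 (x₂ - z.2.1) * qK (1 - z.1.1 - z.1.2) (z.2.2 - x₁') *
      qK (1 - z.1.1 - z.1.2) (z.2.2 - x₂') with hF
    have hFm : Measurable F := by
      refine ((((hk.mul ?_).mul ?_).mul ?_).mul ?_) <;> apply measurable_qK_comp <;> fun_prop
    have hw : Wker θ 1 x₁ x₂ x₁' x₂' ≤ ∫⁻ z, F z ∂rhoT := by
      rw [← lintegral_rhoT F hFm]
      exact hW x₁ x₂ x₁' x₂'
    calc _ ≤ ENNReal.ofReal (g x₁ * g x₂) * (∫⁻ z, F z ∂rhoT) *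
          ENNReal.ofReal (g' x₁' * g' x₂') := by gcongr
      _ = ∫⁻ z, ENNReal.ofReal (g x₁ * g x₂) * F z * ENNReal.ofReal (g' x₁' * g' x₂') ∂rhoT := by
        rw [lintegral_mul_const _ (hFm.const_mul _), lintegral_const_mul _ hFm]
      _ ≤ _ := by
        apply lintegral_mono
        intro z
        apply le_of_eq
        simp only [F, k, a, b]
        rw [ENNReal.ofReal_mul (hg0 _), ENNReal.ofReal_mul (hg'0 _)]
        ring
  rw [four_swap volume rhoT k a b hk ha hb] at step1
  have hA : Measurable (fun z => ∫⁻ x, a x z) := ha.lintegral_prod_left'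
  have bA : ∀ z, ∫⁻ x, a x z ≤ M := by
    intro z
    calc ∫⁻ x, a x z ≤ ∫⁻ x, M * qK z.1.1 (x - z.2.1) := by
          apply lintegral_mono; intro x
          exact mul_le_mul_left (hgM x) _
      _ = M * ∫⁻ x, qK z.1.1 (x - z.2.1) := lintegral_const_mul' _ _ hM
      _ ≤ M * 1 := by gcongr; exact lintegral_qK_sub_right _ _
      _ = M := mul_one _
  have bB : ∀ z, ∫⁻ x, b x z ≤ M' := by
    intro z
    calc ∫⁻ x, b x z ≤ ∫⁻ x, M' * qK (1 - z.1.1 - z.1.2) (z.2.2 - x) := by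
          apply lintegral_mono; intro x
          exact mul_le_mul_left (hgM' x) _
      _ = M' * ∫⁻ x, qK (1 - z.1.1 - z.1.2) (z.2.2 - x) := lintegral_const_mul' _ _ hM'
      _ ≤ M' * 1 := by gcongr; exact lintegral_qK_sub_left _ _
      _ = M' := mul_one _
  set D : ℝ≥0∞ := K * M' * M' * M with hD
  have hDt : D ≠ ⊤ := by
    rw [hD]
    exact ENNReal.mul_ne_top (ENNReal.mul_ne_top (ENNReal.mul_ne_top hK hM') hM') hM
  have hm1 : Measurable (fun z : ZT => qK (z.1.2 / 2) (z.2.1 - z.2.2)) := by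
    apply measurable_qK_comp <;> fun_prop
  have step2 : Npair g g' θ ≤
      ∫⁻ z : ZT, D * ((∫⁻ x, a x z) * qK (z.1.2 / 2) (z.2.1 - z.2.2)) ∂rhoT := by
    refine step1.trans (lintegral_mono ?_)
    intro z
    calc _ ≤ k z * M' * M' * (∫⁻ x, a x z) * M := by
          have h1 := bA z
          have h2 := bB z
          exact mul_le_mul' (mul_le_mul' (mul_le_mul' (mul_le_mul' le_rfl h2) h2) le_rfl) h1
      _ = _ := by
          simp only [k, hD]
          ring
  refine lt_of_le_of_lt step2 ?_
  rw [lintegral_const_mul' _ _ hDt]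
  apply ENNReal.mul_lt_top hDt.lt_top
  rw [← lintegral_rhoT (fun z : ZT => (∫⁻ x, a x z) * qK (z.1.2 / 2) (z.2.1 - z.2.2))
    (hA.mul hm1)]
  have inner : ∀ u u' : ℝ, ∫⁻ y : Plane, ∫⁻ y' : Plane,
      (∫⁻ x, a x ((u, u'), (y, y'))) * qK (u' / 2) (y - y') ≤ ∫⁻ x, ENNReal.ofReal (g x) := by
    intro u u'
    have hq : Measurable (fun p : Plane × Plane => qK u (p.1 - p.2)) := by
      apply measurable_qK_comp <;> fun_prop
    calc _ ≤ ∫⁻ y : Plane, ∫⁻ x, ENNReal.ofReal (g x) * qK u (x - y) := by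
          apply lintegral_mono; intro y
          simp only [a]
          rw [lintegral_const_mul]
          · calc _ ≤ (∫⁻ x, ENNReal.ofReal (g x) * qK u (x - y)) * 1 := by
                  gcongr; exact lintegral_qK_sub_left _ _
              _ = _ := mul_one _
          · apply measurable_qK_comp <;> fun_prop
      _ = ∫⁻ x, ∫⁻ y : Plane, ENNReal.ofReal (g x) * qK u (x - y) := by
          rw [lintegral_lintegral_swap]
          apply Measurable.aemeasurable
          apply Measurable.mul
          · fun_prop
          · apply measurable_qK_comp <;> fun_prop
      _ ≤ _ := by
          apply lintegral_mono; intro x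
          dsimp only
          rw [lintegral_const_mul' _ _ ENNReal.ofReal_ne_top]
          calc _ ≤ ENNReal.ofReal (g x) * 1 := by
                gcongr; exact lintegral_qK_sub_left _ _
            _ = _ := mul_one _
  calc _ ≤ ∫⁻ _u, ∫⁻ _u', (∫⁻ x, ENNReal.ofReal (g x)) ∂nuT ∂nuT := by
        apply lintegral_mono; intro u
        apply lintegral_mono; intro u'
        exact inner u u'
    _ < ⊤ := by
        rw [lintegral_const, lintegral_const]
        exact ENNReal.mul_lt_top (ENNReal.mul_lt_top hL (measure_lt_top _ _)) (measure_lt_top _ _)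

/-- For continuous, compactly supported, nonnegative, not-identically-zero `g, g'` and every
`θ̄ ∈ ℝ`, the pairing `N_{g,g'}(θ̄)` is finite and strictly positive. -/
theorem Npair_pos_finite (g g' : Plane → ℝ)
    (hgc : Continuous g) (hg'c : Continuous g')
    (hgs : HasCompactSupport g) (hg's : HasCompactSupport g')
    (hg0 : ∀ x, 0 ≤ g x) (hg'0 : ∀ x, 0 ≤ g' x)
    (hgne : g ≠ 0) (hg'ne : g' ≠ 0) (θ : ℝ) :
    0 < Npair g g' θ ∧ Npair g g' θ < ⊤ := by
  exact ⟨Npair_pos g g' hgc hg'c hg0 hg'0 hgne hg'ne θ,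
    Npair_fin g g' hgc hg'c hgs hg's hg0 hg'0 θ⟩

end
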